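/- If U is a dead-ending universe, then * is U-invertible if and only if U = D, the dicot universe. Equivalently, the dicot universe is the only dead-ending universe in which * is invertible. -/

import Mathlib

/-- Augmented (misère) game forms: finitely many Left and Right options,
    possibly adorned with a Left and/or Right tombstone marker. -/
inductive Aug : Type
  | mk (m n : ℕ) (L : Fin m → Aug) (R : Fin n → Aug) (tl tr : Bool) : Aug

namespace Aug

def numL : Aug → ℕ
  | mk m _ _ _ _ _ => m

def numR : Aug → ℕ
  | mk _ n _ _ _ _ => n

def moveL : (G : Aug) → Fin G.numL → Aug
  | mk _ _ L _ _ _ => L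

def moveR : (G : Aug) → Fin G.numR → Aug
  | mk _ _ _ R _ _ => R

def tombL : Aug → Bool
  | mk _ _ _ _ t _ => t

def tombR : Aug → Bool
  | mk _ _ _ _ _ t => t

instance : Zero Aug := ⟨mk 0 0 Fin.elim0 Fin.elim0 false false⟩

/-- Disjunctive sum of augmented forms (tombstones propagate to the sum). -/
protected noncomputable def add : Aug → Aug → Aug := by
  intro x
  induction x with
  | mk m n L R tl tr IHL IHR =>
    intro y
    induction y with
    | mk m' n' L' R' tl' tr' IHL' IHR' =>
      exact mk (m + m') (n + n')
        (Fin.addCases (motive := fun _ => Aug)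
          (fun i => IHL i (mk m' n' L' R' tl' tr')) (fun j => IHL' j))
        (Fin.addCases (motive := fun _ => Aug)
          (fun i => IHR i (mk m' n' L' R' tl' tr')) (fun j => IHR' j))
        (tl || tl') (tr || tr')

noncomputable instance : Add Aug := ⟨Aug.add⟩

/-- Conjugate: swap Left and Right throughout. -/
noncomputable def conj : Aug → Aug := by
  intro G
  induction G with
  | mk m n L R tl tr IHL IHR => exact mk n m IHR IHL tr tl

/-- A genuine game form: no tombstones anywhere. -/
def IsGame : Aug → Prop := by
  intro G
  induction G with
  | mk m n L R tl tr IHL IHR =>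
    exact tl = false ∧ tr = false ∧ (∀ i, IHL i) ∧ (∀ j, IHR j)

/-- Formal birthday (tombstones contribute nothing). -/
noncomputable def birthday : Aug → ℕ := by
  intro G
  induction G with
  | mk m n L R _ _ IHL IHR =>
    exact max (Finset.univ.sup fun i => IHL i + 1) (Finset.univ.sup fun j => IHR j + 1)

/-- `winsF G true` : Left, moving first, wins `G` in misère play
    (a Left end-like position is a first-player win for Left).
    `winsF G false` : Right, moving first, wins `G`. -/
def winsF : Aug → Bool → Prop := by
  intro G
  induction G with
  | mk m n L R tl tr IHL IHR =>
    intro b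
    exact match b with
      | true => tl = true ∨ m = 0 ∨ ∃ i, ¬ IHL i false
      | false => tr = true ∨ n = 0 ∨ ∃ j, ¬ IHR j true

/-- Left outcome is `L`. -/
def oL (G : Aug) : Prop := winsF G true

/-- Right outcome is `L` (Left, moving second, wins). -/
def oR (G : Aug) : Prop := ¬ winsF G false

/-- `outcome G ≥ outcome H` in the misère partial order of outcomes
    (Left prefers larger). -/
def outGe (G H : Aug) : Prop := (oL H → oL G) ∧ (oR H → oR G)

/-- `outcome G = outcome H`. -/
def outEq (G H : Aug) : Prop := (oL G ↔ oL H) ∧ (oR G ↔ oR H)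

/-- `G ≥_A H`. -/
def geA (A : Set Aug) (G H : Aug) : Prop := ∀ X ∈ A, outGe (G + X) (H + X)

/-- `G ≡_A H`. -/
def equivA (A : Set Aug) (G H : Aug) : Prop := ∀ X ∈ A, outEq (G + X) (H + X)

def LeftEnd (G : Aug) : Prop := G.numL = 0
def RightEnd (G : Aug) : Prop := G.numR = 0
def LeftEndLike (G : Aug) : Prop := G.tombL = true ∨ G.numL = 0
def RightEndLike (G : Aug) : Prop := G.tombR = true ∨ G.numR = 0

/-- `G` is Left `A`-strong. -/
def LeftStrong (A : Set Aug) (G : Aug) : Prop :=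
  ∀ X ∈ A, LeftEnd X → winsF (G + X) true

/-- `G` is Right `A`-strong. -/
def RightStrong (A : Set Aug) (G : Aug) : Prop :=
  ∀ X ∈ A, RightEnd X → winsF (G + X) false

/-- Hereditarily closed set of games. -/
def Hereditary (A : Set Aug) : Prop :=
  ∀ G ∈ A, (∀ i, G.moveL i ∈ A) ∧ (∀ j, G.moveR j ∈ A)

/-- An (absolute) universe of misère games. -/
structure IsUniverse (U : Set Aug) : Prop where
  games : ∀ G ∈ U, IsGame G
  zero_mem : (0 : Aug) ∈ U
  add_mem : ∀ G ∈ U, ∀ H ∈ U, G + H ∈ U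
  conj_mem : ∀ G ∈ U, conj G ∈ U
  moveL_mem : ∀ G ∈ U, ∀ i, G.moveL i ∈ U
  moveR_mem : ∀ G ∈ U, ∀ j, G.moveR j ∈ U
  dicotic : ∀ (m n : ℕ) (L : Fin m → Aug) (R : Fin n → Aug), 0 < m → 0 < n →
    (∀ i, L i ∈ U) → (∀ j, R j ∈ U) → mk m n L R false false ∈ U

/-- `Û`: the augmented forms admitting a `U`-expansion, i.e. equivalent
    modulo `U` to some member of `U`. -/
def hatU (U : Set Aug) : Set Aug := {G | ∃ G' ∈ U, equivA U G G'}

/-- `G` is `A`-invertible (with inverse in `A`). -/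
def Invertible (A : Set Aug) (G : Aug) : Prop := ∃ H ∈ A, equivA A (G + H) 0

/-- `G` is `U`-invertible with inverse in `Û`. -/
def InvertibleHat (U : Set Aug) (G : Aug) : Prop := ∃ H ∈ hatU U, equivA U (G + H) 0

/-- `G` is conjugate `A`-invertible. -/
def ConjInvertible (A : Set Aug) (G : Aug) : Prop :=
  conj G ∈ A ∧ equivA A (G + conj G) 0

/-- `A` is a monoid of games: a set of games containing `0`, closed under
    disjunctive sum, on which `≡_A` is a congruence. -/
structure IsMonoidOfGames (A : Set Aug) : Prop where
  games : ∀ G ∈ A, IsGame G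
  zero_mem : (0 : Aug) ∈ A
  add_mem : ∀ G ∈ A, ∀ H ∈ A, G + H ∈ A
  congr : ∀ G ∈ A, ∀ H ∈ A, ∀ J ∈ A, equivA A G H → equivA A (G + J) (H + J)

/-- `U`-simplest form: hereditarily, no dominated options, no reversible
    options, and no unnecessary tombstones. -/
def Simplest (U : Set Aug) : Aug → Prop := by
  intro G
  induction G with
  | mk m n L R tl tr IHL IHR =>
    exact
      (∀ i i' : Fin m, geA U (L i) (L i') → i = i') ∧
      (∀ j j' : Fin n, geA U (R j) (R j') → j = j') ∧
      (∀ i : Fin m, ∀ jj : Fin (L i).numR, ¬ geA U (mk m n L R tl tr) ((L i).moveR jj)) ∧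
      (∀ j : Fin n, ∀ ii : Fin (R j).numL, ¬ geA U ((R j).moveL ii) (mk m n L R tl tr)) ∧
      (tl = true → ¬ equivA U (mk m n L R tl tr) (mk m n L R false tr)) ∧
      (tr = true → ¬ equivA U (mk m n L R tl tr) (mk m n L R tl false)) ∧
      (∀ i, IHL i) ∧ (∀ j, IHR j)

lemma birthday_mk (m n : ℕ) (L : Fin m → Aug) (R : Fin n → Aug) (tl tr : Bool) :
    birthday (mk m n L R tl tr) =
      max (Finset.univ.sup fun i => birthday (L i) + 1)
          (Finset.univ.sup fun j => birthday (R j) + 1) := rfl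

lemma birthday_moveL_lt : ∀ (G : Aug) (i : Fin G.numL), birthday (G.moveL i) < birthday G := by
  intro G
  cases G with
  | mk m n L R tl tr =>
    intro i
    show birthday (L i) < birthday (mk m n L R tl tr)
    rw [birthday_mk]
    have h1 : birthday (L i) + 1 ≤ Finset.univ.sup (fun i => birthday (L i) + 1) :=
      Finset.le_sup (f := fun i => birthday (L i) + 1) (Finset.mem_univ i)
    exact lt_of_lt_of_le (Nat.lt_succ_self _) (h1.trans (le_max_left _ _))

lemma birthday_moveR_lt : ∀ (G : Aug) (j : Fin G.numR), birthday (G.moveR j) < birthday G := by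
  intro G
  cases G with
  | mk m n L R tl tr =>
    intro j
    show birthday (R j) < birthday (mk m n L R tl tr)
    rw [birthday_mk]
    have h1 : birthday (R j) + 1 ≤ Finset.univ.sup (fun j => birthday (R j) + 1) :=
      Finset.le_sup (f := fun j => birthday (R j) + 1) (Finset.mem_univ j)
    exact lt_of_lt_of_le (Nat.lt_succ_self _) (h1.trans (le_max_right _ _))

/-- A disintegrator. -/
def Disintegrator (G : Aug) : Prop :=
  ∃ j : Fin G.numR, (G.moveR j).numL ≠ 0 ∧
    ∀ i : Fin (G.moveR j).numL,
      ¬ winsF ((G.moveR j).moveL i) true ∨ Disintegrator ((G.moveR j).moveL i)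
termination_by birthday G
decreasing_by exact lt_trans (birthday_moveL_lt _ _) (birthday_moveR_lt _ _)

/-- A starkiller. -/
def Starkiller (G : Aug) : Prop :=
  ∃ j : Fin G.numR, winsF (G.moveR j) false ∧
    ∀ i : Fin (G.moveR j).numL,
      ¬ winsF ((G.moveR j).moveL i) true ∨ Starkiller ((G.moveR j).moveL i)
termination_by birthday G
decreasing_by exact lt_trans (birthday_moveL_lt _ _) (birthday_moveR_lt _ _)

def one : Aug := mk 1 0 (fun _ => 0) Fin.elim0 false false
def two : Aug := mk 1 0 (fun _ => one) Fin.elim0 false false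
def star : Aug := mk 1 1 (fun _ => 0) (fun _ => 0) false false
/-- `conjugate(1) = {·|0}`. -/
def oneConj : Aug := mk 0 1 Fin.elim0 (fun _ => 0) false false
/-- `{·|2}`. -/
def endTwo : Aug := mk 0 1 Fin.elim0 (fun _ => two) false false

/-- `n` copies of `G` summed. -/
noncomputable def nCopies : ℕ → Aug → Aug
  | 0, _ => 0
  | n + 1, G => nCopies n G + G

/-- Dicot: every subposition has both or neither kind of option. -/
def Dicot : Aug → Prop := by
  intro G
  induction G with
  | mk m n L R _ _ IHL IHR => exact (m = 0 ↔ n = 0) ∧ (∀ i, IHL i) ∧ (∀ j, IHR j)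

/-- Hereditarily a Left end. -/
def LeftEndHered : Aug → Prop := by
  intro G
  induction G with
  | mk m n L R _ _ IHL IHR => exact m = 0 ∧ (∀ j, IHR j)

/-- Hereditarily a Right end. -/
def RightEndHered : Aug → Prop := by
  intro G
  induction G with
  | mk m n L R _ _ IHL IHR => exact n = 0 ∧ (∀ i, IHL i)

/-- Dead-ending: once a player has no move in a subposition, that player
    never again has a move. -/
def DeadEnding : Aug → Prop := by
  intro G
  induction G with
  | mk m n L R tl tr IHL IHR =>
    exact (m = 0 → LeftEndHered (mk m n L R tl tr)) ∧
      (n = 0 → RightEndHered (mk m n L R tl tr)) ∧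
      (∀ i, IHL i) ∧ (∀ j, IHR j)

/-- Left weak set of games. -/
def LeftWeak (A : Set Aug) : Prop := ∀ G : Aug, LeftStrong A G ↔ LeftEndLike G

/-- Right weak set of games. -/
def RightWeak (A : Set Aug) : Prop := ∀ G : Aug, RightStrong A G ↔ RightEndLike G

end Aug

namespace Aug

lemma fin_elim {n : ℕ} (h : n = 0) (i : Fin n) : False := by
  subst h; exact i.elim0

lemma winsF_true' (G : Aug) : winsF G true ↔
    G.tombL = true ∨ G.numL = 0 ∨ ∃ i, ¬ winsF (G.moveL i) false := by
  cases G; rfl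

lemma winsF_false' (G : Aug) : winsF G false ↔
    G.tombR = true ∨ G.numR = 0 ∨ ∃ i, ¬ winsF (G.moveR i) true := by
  cases G; rfl

lemma add_mk (m n L R tl tr m' n' L' R' tl' tr') :
    (mk m n L R tl tr + mk m' n' L' R' tl' tr' : Aug) =
      mk (m + m') (n + n')
        (Fin.addCases (motive := fun _ => Aug)
          (fun i => L i + (mk m' n' L' R' tl' tr')) (fun j => mk m n L R tl tr + L' j))
        (Fin.addCases (motive := fun _ => Aug)
          (fun i => R i + (mk m' n' L' R' tl' tr')) (fun j => mk m n L R tl tr + R' j))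
        (tl || tl') (tr || tr') := rfl

lemma numL_add (G H : Aug) : (G + H).numL = G.numL + H.numL := by
  cases G; cases H; rfl

lemma numR_add (G H : Aug) : (G + H).numR = G.numR + H.numR := by
  cases G; cases H; rfl

lemma tombL_add (G H : Aug) : (G + H).tombL = (G.tombL || H.tombL) := by
  cases G; cases H; rfl

lemma tombR_add (G H : Aug) : (G + H).tombR = (G.tombR || H.tombR) := by
  cases G; cases H; rfl

lemma forall_addL (G H : Aug) (P : Aug → Prop) : (∀ i, P ((G + H).moveL i)) ↔
    (∀ i, P (G.moveL i + H)) ∧ ∀ i, P (G + H.moveL i) := by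
  cases G with | mk m n L R tl tr =>
  cases H with | mk m' n' L' R' tl' tr' =>
  rw [add_mk]
  simp only [moveL, numL]
  constructor
  · intro h
    refine ⟨fun i => ?_, fun i => ?_⟩
    · simpa using h (Fin.castAdd m' i)
    · simpa using h (Fin.natAdd m i)
  · rintro ⟨h1, h2⟩ i
    refine Fin.addCases (fun i => ?_) (fun i => ?_) i
    · simpa using h1 i
    · simpa using h2 i

lemma forall_addR (G H : Aug) (P : Aug → Prop) : (∀ i, P ((G + H).moveR i)) ↔
    (∀ i, P (G.moveR i + H)) ∧ ∀ i, P (G + H.moveR i) := by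
  cases G with | mk m n L R tl tr =>
  cases H with | mk m' n' L' R' tl' tr' =>
  rw [add_mk]
  simp only [moveR, numR]
  constructor
  · intro h
    refine ⟨fun i => ?_, fun i => ?_⟩
    · simpa using h (Fin.castAdd n' i)
    · simpa using h (Fin.natAdd n i)
  · rintro ⟨h1, h2⟩ i
    refine Fin.addCases (fun i => ?_) (fun i => ?_) i
    · simpa using h1 i
    · simpa using h2 i

lemma exists_addL (G H : Aug) (P : Aug → Prop) : (∃ i, P ((G + H).moveL i)) ↔
    (∃ i, P (G.moveL i + H)) ∨ ∃ i, P (G + H.moveL i) := by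
  have := forall_addL G H (fun x => ¬ P x)
  by_contra hc
  simp only [← not_exists] at this
  tauto

lemma exists_addR (G H : Aug) (P : Aug → Prop) : (∃ i, P ((G + H).moveR i)) ↔
    (∃ i, P (G.moveR i + H)) ∨ ∃ i, P (G + H.moveR i) := by
  have := forall_addR G H (fun x => ¬ P x)
  by_contra hc
  simp only [← not_exists] at this
  tauto

lemma IsGame.tL {G : Aug} (h : IsGame G) : G.tombL = false := by
  cases G; exact h.1

lemma IsGame.tR {G : Aug} (h : IsGame G) : G.tombR = false := by
  cases G; exact h.2.1

lemma winT {G : Aug} (hG : IsGame G) : winsF G true ↔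
    G.numL = 0 ∨ ∃ i, ¬ winsF (G.moveL i) false := by
  rw [winsF_true', hG.tL]; simp

lemma winR {G : Aug} (hG : IsGame G) : winsF G false ↔
    G.numR = 0 ∨ ∃ i, ¬ winsF (G.moveR i) true := by
  rw [winsF_false', hG.tR]; simp

lemma winT_add {G H : Aug} (hG : IsGame G) (hH : IsGame H) : winsF (G + H) true ↔
    (G.numL = 0 ∧ H.numL = 0) ∨ (∃ i, ¬ winsF (G.moveL i + H) false) ∨
      ∃ i, ¬ winsF (G + H.moveL i) false := by
  rw [winsF_true', tombL_add, hG.tL, hH.tL,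
    exists_addL G H (fun x => ¬ winsF x false), numL_add]
  simp

lemma winR_add {G H : Aug} (hG : IsGame G) (hH : IsGame H) : winsF (G + H) false ↔
    (G.numR = 0 ∧ H.numR = 0) ∨ (∃ i, ¬ winsF (G.moveR i + H) true) ∨
      ∃ i, ¬ winsF (G + H.moveR i) true := by
  rw [winsF_false', tombR_add, hG.tR, hH.tR,
    exists_addR G H (fun x => ¬ winsF x true), numR_add]
  simp

lemma mk_congr {m m' n n' : ℕ} (hm : m = m') (hn : n = n') {L : Fin m → Aug} {L' : Fin m' → Aug}
    {R : Fin n → Aug} {R' : Fin n' → Aug} {tl tr tl' tr' : Bool}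
    (hL : ∀ i, L i = L' (Fin.cast hm i)) (hR : ∀ i, R i = R' (Fin.cast hn i))
    (h1 : tl = tl') (h2 : tr = tr') : mk m n L R tl tr = mk m' n' L' R' tl' tr' := by
  subst hm hn h1 h2
  have : L = L' := funext hL
  have : R = R' := funext hR
  subst_vars
  rfl

lemma zero_def : (0 : Aug) = mk 0 0 Fin.elim0 Fin.elim0 false false := rfl

protected lemma zero_add (G : Aug) : 0 + G = G := by
  induction G with
  | mk m n L R tl tr IHL IHR =>
    rw [zero_def, add_mk]
    refine mk_congr (zero_add _) (zero_add _) ?_ ?_ (by simp) (by simp)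
    · intro i
      refine Fin.addCases (fun i => i.elim0) (fun i => ?_) i
      rw [Fin.addCases_right, ← zero_def, IHL]
      congr 1; ext; simp
    · intro i
      refine Fin.addCases (fun i => i.elim0) (fun i => ?_) i
      rw [Fin.addCases_right, ← zero_def, IHR]
      congr 1; ext; simp

protected lemma add_zero (G : Aug) : G + 0 = G := by
  induction G with
  | mk m n L R tl tr IHL IHR =>
    rw [zero_def, add_mk]
    refine mk_congr (add_zero _) (add_zero _) ?_ ?_ (by simp) (by simp)
    · intro i
      refine Fin.addCases (fun i => ?_) (fun i => i.elim0) i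
      rw [Fin.addCases_left, ← zero_def, IHL]
      congr 1
    · intro i
      refine Fin.addCases (fun i => ?_) (fun i => i.elim0) i
      rw [Fin.addCases_left, ← zero_def, IHR]
      congr 1

lemma isGame_iff (G : Aug) : IsGame G ↔ G.tombL = false ∧ G.tombR = false ∧
    (∀ i, IsGame (G.moveL i)) ∧ ∀ i, IsGame (G.moveR i) := by
  cases G; rfl

lemma dicot_iff (G : Aug) : Dicot G ↔ (G.numL = 0 ↔ G.numR = 0) ∧
    (∀ i, Dicot (G.moveL i)) ∧ ∀ i, Dicot (G.moveR i) := by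
  cases G; rfl

lemma leh_iff (G : Aug) : LeftEndHered G ↔ G.numL = 0 ∧ ∀ i, LeftEndHered (G.moveR i) := by
  cases G; rfl

lemma DeadEnding.leh {G : Aug} (h : DeadEnding G) (h0 : G.numL = 0) : LeftEndHered G := by
  cases G; exact h.1 h0

lemma eq_zero_of_ends {G : Aug} (h : IsGame G) (h1 : G.numL = 0) (h2 : G.numR = 0) : G = 0 := by
  cases G with
  | mk m n L R tl tr =>
    simp only [numL, numR] at h1 h2
    subst h1 h2
    exact mk_congr rfl rfl (fun i => i.elim0) (fun i => i.elim0) h.1 h.2.1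

lemma zero_mk_game : IsGame 0 := ⟨rfl, rfl, fun i => i.elim0, fun i => i.elim0⟩

lemma wins_zero (b : Bool) : winsF 0 b := by
  cases b
  · exact Or.inr (Or.inl rfl)
  · exact Or.inr (Or.inl rfl)

lemma star_game : IsGame star := ⟨rfl, rfl, fun _ => zero_mk_game, fun _ => zero_mk_game⟩

lemma numL_conj (G : Aug) : (conj G).numL = G.numR := by cases G; rfl
lemma numR_conj (G : Aug) : (conj G).numR = G.numL := by cases G; rfl

lemma exists_conjL (G : Aug) (P : Aug → Prop) :
    (∃ i, P ((conj G).moveL i)) ↔ ∃ i, P (conj (G.moveR i)) := by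
  cases G; rfl

/-- one-sided comparison with zero -/
def leZ (U : Set Aug) (G : Aug) : Prop := ∀ X ∈ U,
  (winsF (G + X) true → winsF X true) ∧ (winsF X false → winsF (G + X) false)

section
variable {U : Set Aug}

lemma star_mem (hU : IsUniverse U) : star ∈ U :=
  hU.dicotic 1 1 _ _ one_pos one_pos (fun _ => hU.zero_mem) (fun _ => hU.zero_mem)

/-- Build a dicotic game from a family of left options (plus a given one) and one right option. -/
def bld (n : ℕ) (f : Fin n → Aug) (z r : Aug) : Aug :=
  mk (n + 1) 1 (Fin.cons z f) (fun _ => r) false false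

lemma bld_mem (hU : IsUniverse U) {n : ℕ} {f : Fin n → Aug} {z r : Aug} (hf : ∀ i, f i ∈ U)
    (hz : z ∈ U) (hr : r ∈ U) : bld n f z r ∈ U := by
  refine hU.dicotic _ _ _ _ (Nat.succ_pos _) one_pos (fun i => ?_) (fun _ => hr)
  refine Fin.cases ?_ (fun i => ?_) i
  · simpa using hz
  · simpa using hf i

lemma bld_winR_add (hU : IsUniverse U) {n : ℕ} {f : Fin n → Aug} {z r G : Aug}
    (hf : ∀ i, f i ∈ U) (hz : z ∈ U) (hr : r ∈ U) (hG : G ∈ U) :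
    winsF (G + bld n f z r) false ↔
      (∃ i, ¬ winsF (G.moveR i + bld n f z r) true) ∨ ¬ winsF (G + r) true := by
  rw [winR_add (hU.games _ hG) (hU.games _ (bld_mem hU hf hz hr))]
  constructor
  · rintro (h | h | ⟨_, h⟩)
    · exact absurd h.2 (by simp [bld, numR])
    · exact Or.inl h
    · exact Or.inr h
  · rintro (h | h)
    · exact Or.inr (Or.inl h)
    · exact Or.inr (Or.inr ⟨(0 : Fin 1), h⟩)

lemma bld_winT_add (hU : IsUniverse U) {n : ℕ} {f : Fin n → Aug} {z r G : Aug}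
    (hf : ∀ i, f i ∈ U) (hz : z ∈ U) (hr : r ∈ U) (hG : G ∈ U) :
    winsF (G + bld n f z r) true ↔
      (∃ i, ¬ winsF (G.moveL i + bld n f z r) false) ∨ ¬ winsF (G + z) false ∨
        ∃ i, ¬ winsF (G + f i) false := by
  rw [winT_add (hU.games _ hG) (hU.games _ (bld_mem hU hf hz hr))]
  have : (∃ i, ¬ winsF (G + (bld n f z r).moveL i) false) ↔
      ¬ winsF (G + z) false ∨ ∃ i, ¬ winsF (G + f i) false := by
    show (∃ i : Fin (n+1), ¬ winsF (G + (Fin.cons z f : Fin (n+1) → Aug) i) false) ↔ _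
    rw [Fin.exists_fin_succ]
    simp
  rw [this]
  constructor
  · rintro (h | h)
    · exact absurd h.2 (by simp [bld, numL])
    · exact h
  · exact Or.inr

/-- Some game of the universe lets Left win moving second. -/
lemma exists_second (hU : IsUniverse U) : ∀ A ∈ U, ∃ B ∈ U, ¬ winsF (A + B) false := by
  intro A
  induction A with
  | mk m n L R tl tr IHL IHR =>
    intro hA
    have hL : ∀ i, L i ∈ U := hU.moveL_mem _ hA
    have hR : ∀ i, R i ∈ U := hU.moveR_mem _ hA
    choose f hf hfw using fun i => IHR i (hR i)
    have key : ∃ r ∈ U, winsF (mk m n L R tl tr + r) true := by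
      rcases Nat.eq_zero_or_pos m with rfl | hm
      · exact ⟨0, hU.zero_mem, by
          rw [winT_add (hU.games _ hA) zero_mk_game]; exact Or.inl ⟨rfl, rfl⟩⟩
      · obtain ⟨r, hr, hrw⟩ := IHL ⟨0, hm⟩ (hL _)
        exact ⟨r, hr, by
          rw [winT_add (hU.games _ hA) (hU.games _ hr)]
          exact Or.inr (Or.inl ⟨⟨0, hm⟩, hrw⟩)⟩
    obtain ⟨r, hr, hrw⟩ := key
    refine ⟨bld n f 0 r, bld_mem hU hf hU.zero_mem hr, ?_⟩
    rw [bld_winR_add hU hf hU.zero_mem hr hA]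
    rintro (⟨i, h⟩ | h)
    · apply h
      show winsF (R i + bld n f 0 r) true
      rw [bld_winT_add hU hf hU.zero_mem hr (hR i)]
      exact Or.inr (Or.inr ⟨i, hfw i⟩)
    · exact h hrw

lemma exists_first (hU : IsUniverse U) {A : Aug} (hA : A ∈ U) :
    ∃ B ∈ U, winsF (A + B) true := by
  obtain ⟨B, hB, h⟩ := exists_second hU A hA
  have h0 : ∀ i : Fin 0, (Fin.elim0 i : Aug) ∈ U := fun i => i.elim0
  refine ⟨bld 0 Fin.elim0 B 0, bld_mem hU h0 hB hU.zero_mem, ?_⟩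
  rw [bld_winT_add hU h0 hB hU.zero_mem hA]
  exact Or.inr (Or.inl h)

lemma sep (hU : IsUniverse U) {G : Aug} (hG : G ∈ U) (h : ¬ leZ U G) :
    ∃ Y ∈ U, ¬ winsF (G + Y) false ∧ winsF Y false := by
  by_contra hc
  push Not at hc
  apply h
  intro X hX
  refine ⟨fun h1 => ?_, fun h2 => ?_⟩
  · by_contra h3
    choose f hf hfw using fun i => exists_second hU _ (hU.moveR_mem G hG i)
    have hm := bld_mem hU hf hU.zero_mem hX
    refine hc _ hm ?_ ?_
    · rw [bld_winR_add hU hf hU.zero_mem hX hG]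
      rintro (⟨i, h⟩ | h)
      · apply h
        rw [bld_winT_add hU hf hU.zero_mem hX (hU.moveR_mem G hG i)]
        exact Or.inr (Or.inr ⟨i, hfw i⟩)
      · exact h h1
    · rw [winR (hU.games _ hm)]
      exact Or.inr ⟨(0 : Fin 1), h3⟩
  · by_contra h3
    exact hc X hX h3 h2

lemma maint (hU : IsUniverse U) {G : Aug} (hG : G ∈ U) (h : leZ U G) (i : Fin G.numL) :
    ∃ j, leZ U ((G.moveL i).moveR j) := by
  by_contra hc
  push Not at hc
  have hGL := hU.moveL_mem G hG i
  have hGLR := hU.moveR_mem _ hGL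
  choose f hf hf1 hf2 using fun j => sep hU (hGLR j) (hc j)
  obtain ⟨z, hz, hzw⟩ := exists_first hU hGL
  have hm := bld_mem hU hf hU.zero_mem hz
  have h1 : winsF (G + bld _ f 0 z) true := by
    rw [bld_winT_add hU hf hU.zero_mem hz hG]
    refine Or.inl ⟨i, ?_⟩
    rw [bld_winR_add hU hf hU.zero_mem hz hGL]
    rintro (⟨j, h⟩ | h)
    · apply h
      rw [bld_winT_add hU hf hU.zero_mem hz (hGLR j)]
      exact Or.inr (Or.inr ⟨j, hf1 j⟩)
    · exact h hzw
  have h2 := (h _ hm).1 h1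
  rw [← Aug.zero_add (bld _ f 0 z), bld_winT_add hU hf hU.zero_mem hz hU.zero_mem] at h2
  rcases h2 with ⟨i, _⟩ | h2 | ⟨j, h2⟩
  · exact i.elim0
  · rw [Aug.zero_add] at h2; exact h2 (wins_zero _)
  · rw [Aug.zero_add] at h2; exact h2 (hf2 j)

/-- Right can finish in exactly `k` moves. -/
def FinR : ℕ → Aug → Prop
  | 0, G => G.numR = 0
  | k + 1, G => ∃ j, FinR k (G.moveR j)

def FinL : ℕ → Aug → Prop
  | 0, G => G.numL = 0
  | k + 1, G => ∃ j, FinL k (G.moveL j)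

lemma finL_conj (k : ℕ) : ∀ G, FinR k G → FinL k (conj G) := by
  induction k with
  | zero => intro G h; exact (numL_conj G).trans h
  | succ k ih =>
    rintro G ⟨j, hj⟩
    exact (exists_conjL G (FinL k)).2 ⟨j, ih _ hj⟩

lemma exists_finR : ∀ G : Aug, ∃ k, FinR k G := by
  intro G
  induction G with
  | mk m n L R tl tr IHL IHR =>
    rcases Nat.eq_zero_or_pos n with h | h
    · exact ⟨0, h⟩
    · obtain ⟨k, hk⟩ := IHR ⟨0, h⟩
      exact ⟨k + 1, ⟨0, h⟩, hk⟩

lemma reh_iff (G : Aug) : RightEndHered G ↔ G.numR = 0 ∧ ∀ i, RightEndHered (G.moveL i) := by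
  cases G; rfl

lemma DeadEnding.reh {G : Aug} (h : DeadEnding G) (h0 : G.numR = 0) : RightEndHered G := by
  cases G; exact h.2.1 h0

lemma race (hU : IsUniverse U) (k : ℕ) : ∀ J ∈ U, ∀ M ∈ U, LeftEndHered J → RightEndHered M →
    FinL k M → (∀ k' < k, ¬ FinR k' J) → winsF (J + M) true := by
  induction k with
  | zero =>
    intro J hJ M hM hJ' hM' h _
    rw [winT_add (hU.games _ hJ) (hU.games _ hM)]
    exact Or.inl ⟨((leh_iff J).1 hJ').1, h⟩
  | succ k ih =>
    rintro J hJ M hM hJ' hM' ⟨i, hi⟩ hk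
    rw [winT_add (hU.games _ hJ) (hU.games _ hM)]
    refine Or.inr (Or.inr ⟨i, ?_⟩)
    have hMi := hU.moveL_mem _ hM i
    have hMr := ((reh_iff M).1 hM').2 i
    rw [winR_add (hU.games _ hJ) (hU.games _ hMi)]
    rintro (h | ⟨j, h⟩ | ⟨j, h⟩)
    · exact hk 0 (Nat.succ_pos _) h.1
    · exact h (ih _ (hU.moveR_mem _ hJ j) _ hMi (((leh_iff J).1 hJ').2 j) hMr hi
        (fun k' hk' hf => hk (k' + 1) (Nat.succ_lt_succ hk') ⟨j, hf⟩))
    · exact fin_elim ((reh_iff _).1 hMr).1 j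

lemma race_conj (hU : IsUniverse U) (hDE : ∀ G ∈ U, DeadEnding G) {J : Aug} (hJ : J ∈ U)
    (h0 : J.numL = 0) : winsF (J + conj J) true := by
  classical
  have hc := hU.conj_mem J hJ
  refine race hU (Nat.find (exists_finR J)) J hJ _ hc ((hDE J hJ).leh h0)
    ((hDE _ hc).reh ((numR_conj J).trans h0)) (finL_conj _ _ (Nat.find_spec (exists_finR J)))
    (fun k' hk' => Nat.find_min _ hk')

/-- Split right-first wins of `(* + J) + X`. -/
lemma star_add_R (hU : IsUniverse U) {J X : Aug} (hJ : J ∈ U) (hX : X ∈ U) :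
    winsF (star + J + X) false ↔ ¬ winsF (J + X) true ∨
      (∃ j, ¬ winsF (star + J.moveR j + X) true) ∨ ∃ j, ¬ winsF (star + J + X.moveR j) true := by
  rw [winR_add (hU.games _ (hU.add_mem _ (star_mem hU) _ hJ)) (hU.games _ hX),
    exists_addR star J (fun x => ¬ winsF (x + X) true), numR_add]
  have h1 : (∃ i, ¬ winsF (star.moveR i + J + X) true) ↔ ¬ winsF (J + X) true := by
    have : ∀ i, star.moveR i + J = J := fun i => Aug.zero_add J
    simp only [this]
    exact ⟨fun ⟨_, h⟩ => h, fun h => ⟨(0 : Fin 1), h⟩⟩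
  rw [h1]
  have : star.numR = 1 := rfl
  rw [this]
  constructor
  · rintro (h | h | h)
    · omega
    · tauto
    · tauto
  · tauto

lemma star_add_T (hU : IsUniverse U) {J X : Aug} (hJ : J ∈ U) (hX : X ∈ U) :
    winsF (star + J + X) true ↔ ¬ winsF (J + X) false ∨
      (∃ j, ¬ winsF (star + J.moveL j + X) false) ∨ ∃ j, ¬ winsF (star + J + X.moveL j) false := by
  rw [winT_add (hU.games _ (hU.add_mem _ (star_mem hU) _ hJ)) (hU.games _ hX),
    exists_addL star J (fun x => ¬ winsF (x + X) false), numL_add]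
  have h1 : (∃ i, ¬ winsF (star.moveL i + J + X) false) ↔ ¬ winsF (J + X) false := by
    have : ∀ i, star.moveL i + J = J := fun i => Aug.zero_add J
    simp only [this]
    exact ⟨fun ⟨_, h⟩ => h, fun h => ⟨(0 : Fin 1), h⟩⟩
  rw [h1]
  have : star.numL = 1 := rfl
  rw [this]
  constructor
  · rintro (h | h | h)
    · omega
    · tauto
    · tauto
  · tauto

lemma mirror (hU : IsUniverse U) (hDE : ∀ G ∈ U, DeadEnding G) : ∀ J ∈ U,
    J.numL = 0 → ¬ winsF (star + J + conj J) false := by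
  intro J
  induction J with
  | mk m n L R tl tr IHL IHR =>
    intro hJ h0
    have hc := hU.conj_mem _ hJ
    have hl := (leh_iff _).1 ((hDE _ hJ).leh h0)
    rw [star_add_R hU hJ hc]
    rintro (h | ⟨j, h⟩ | ⟨j, _⟩)
    · exact h (race_conj hU hDE hJ h0)
    · apply h
      have hj := hU.moveR_mem _ hJ j
      rw [star_add_T hU hj hc]
      refine Or.inr (Or.inr ?_)
      rw [exists_conjL _ (fun x => ¬ winsF (star + (mk m n L R tl tr).moveR j + x) false)]
      exact ⟨j, IHR j hj ((leh_iff _).1 (hl.2 j)).1⟩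
    · exact fin_elim ((numR_conj _).trans h0) j

lemma not_leftEnd (hU : IsUniverse U) (hDE : ∀ G ∈ U, DeadEnding G) {J : Aug} (hJ : J ∈ U)
    (h : leZ U (star + J)) : J.numL ≠ 0 := by
  intro h0
  have hc := hU.conj_mem _ hJ
  refine mirror hU hDE J hJ h0 ((h _ hc).2 ?_)
  rw [winR (hU.games _ hc)]
  exact Or.inl ((numR_conj J).trans h0)

lemma leZ_R {J : Aug} (hU : IsUniverse U) (h : leZ U J) : winsF J false := by
  have := (h 0 hU.zero_mem).2 (wins_zero _)
  rwa [Aug.add_zero] at this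

lemma birthday_LR (J : Aug) (i) (j) : birthday ((J.moveL i).moveR j) < birthday J :=
  lt_trans (birthday_moveR_lt _ _) (birthday_moveL_lt _ _)

lemma star_add_T0 (hU : IsUniverse U) {J : Aug} (hJ : J ∈ U) :
    winsF (star + J) true ↔ ¬ winsF J false ∨
      (∃ j, ¬ winsF (star + J.moveL j) false) := by
  have := star_add_T hU hJ hU.zero_mem
  simp only [Aug.add_zero] at this
  rw [this]
  constructor
  · rintro (h | h | ⟨j, _⟩)
    · exact Or.inl h
    · exact Or.inr h
    · exact j.elim0
  · tauto

lemma star_add_R0 (hU : IsUniverse U) {J : Aug} (hJ : J ∈ U) :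
    winsF (star + J) false ↔ ¬ winsF J true ∨
      (∃ j, ¬ winsF (star + J.moveR j) true) := by
  have := star_add_R hU hJ hU.zero_mem
  simp only [Aug.add_zero] at this
  rw [this]
  constructor
  · rintro (h | h | ⟨j, _⟩)
    · exact Or.inl h
    · exact Or.inr h
    · exact j.elim0
  · tauto

lemma leZ_star (hU : IsUniverse U) : ∀ (n : ℕ) (J : Aug), birthday J < n → J ∈ U → leZ U J →
    ¬ winsF (star + J) true := by
  intro n
  induction n with
  | zero => intro J h; omega
  | succ n ih =>
    intro J hn hJ h
    rw [star_add_T0 hU hJ]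
    rintro (h1 | ⟨i, h1⟩)
    · exact h1 (leZ_R hU h)
    · obtain ⟨j, hj⟩ := maint hU hJ h i
      have hJL := hU.moveL_mem _ hJ i
      apply h1
      rw [star_add_R0 hU hJL]
      exact Or.inr ⟨j, ih _ (by have := birthday_LR J i j; omega) (hU.moveR_mem _ hJL j) hj⟩

/-- Responses for `* + J ≤ 0`. -/
lemma star_maint (hU : IsUniverse U) {J : Aug} (hJ : J ∈ U) (h : leZ U (star + J))
    (i : Fin J.numL) :
    leZ U (J.moveL i) ∨ ∃ j, leZ U (star + (J.moveL i).moveR j) := by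
  have h1 := maint hU (hU.add_mem _ (star_mem hU) _ hJ) h
  have h2 := ((forall_addL star J (fun x => ∃ j, leZ U (x.moveR j))).1 h1).2 i
  rcases (exists_addR star (J.moveL i) (leZ U)).1 h2 with ⟨j, h⟩ | h
  · left
    have : star.moveR j + J.moveL i = J.moveL i := Aug.zero_add _
    rwa [this] at h
  · exact Or.inr h

lemma star_loses (hU : IsUniverse U) (hDE : ∀ G ∈ U, DeadEnding G) {K : Aug} (hK : K ∈ U)
    (hK0 : K.numL = 0) (jK : Fin K.numR) (hjK : K.moveR jK = 0) :
    ∀ (n : ℕ) (J : Aug), birthday J < n → J ∈ U → leZ U (star + J) →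
    ¬ winsF J true ∧ ¬ winsF (star + J + K) true := by
  intro n
  induction n with
  | zero => intro J h; omega
  | succ n ih =>
    intro J hn hJ h
    have hA : ¬ winsF J true := by
      rw [winT (hU.games _ hJ)]
      rintro (h0 | ⟨i, hi⟩)
      · exact not_leftEnd hU hDE hJ h h0
      · apply hi
        have hJL := hU.moveL_mem _ hJ i
        rcases star_maint hU hJ h i with h1 | ⟨j, h1⟩
        · exact leZ_R hU h1
        · rw [winR (hU.games _ hJL)]
          exact Or.inr ⟨j, (ih _ (by have := birthday_LR J i j; omega)
            (hU.moveR_mem _ hJL j) h1).1⟩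
    refine ⟨hA, ?_⟩
    rw [star_add_T hU hJ hK]
    rintro (h1 | ⟨i, h1⟩ | ⟨j, _⟩)
    · apply h1
      rw [winR_add (hU.games _ hJ) (hU.games _ hK)]
      refine Or.inr (Or.inr ⟨jK, ?_⟩)
      rwa [hjK, Aug.add_zero]
    · apply h1
      have hJL := hU.moveL_mem _ hJ i
      rw [star_add_R hU hJL hK]
      rcases star_maint hU hJ h i with h2 | ⟨j, h2⟩
      · refine Or.inr (Or.inr ⟨jK, ?_⟩)
        rw [hjK, Aug.add_zero]
        exact leZ_star hU _ _ (Nat.lt_succ_self _) hJL h2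
      · exact Or.inr (Or.inl ⟨j, (ih _ (by have := birthday_LR J i j; omega)
            (hU.moveR_mem _ hJL j) h2).2⟩)
    · exact fin_elim hK0 j

lemma find_K (hU : IsUniverse U) : ∀ G ∈ U, LeftEndHered G → G.numR ≠ 0 →
    ∃ K ∈ U, K.numL = 0 ∧ ∃ j, K.moveR j = 0 := by
  intro G
  induction G with
  | mk m n L R tl tr IHL IHR =>
    intro hG hl hn
    have j : Fin n := ⟨0, Nat.pos_of_ne_zero hn⟩
    have hj : R j ∈ U := hU.moveR_mem _ hG j
    have hlj : LeftEndHered (R j) := hl.2 j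
    by_cases h : (R j).numR = 0
    · exact ⟨_, hG, hl.1, j, eq_zero_of_ends (hU.games _ hj) ((leh_iff _).1 hlj).1 h⟩
    · exact IHR j hj hlj h

lemma all_dicot (hU : IsUniverse U) (h : ∀ G ∈ U, G.numL = 0 → G.numR = 0) :
    ∀ G ∈ U, Dicot G := by
  intro G
  induction G with
  | mk m n L R tl tr IHL IHR =>
    intro hG
    refine ⟨⟨h _ hG, fun hn => ?_⟩, fun i => IHL i (hU.moveL_mem _ hG i),
      fun i => IHR i (hU.moveR_mem _ hG i)⟩
    have := h _ (hU.conj_mem _ hG) ((numL_conj _).trans hn)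
    rwa [numR_conj] at this

lemma dicot_sub (hU : IsUniverse U) : ∀ G, IsGame G → Dicot G → G ∈ U := by
  intro G
  induction G with
  | mk m n L R tl tr IHL IHR =>
    intro hg hd
    by_cases hm : m = 0
    · rw [eq_zero_of_ends hg hm (hd.1.1 hm)]
      exact hU.zero_mem
    · obtain rfl : tl = false := hg.1
      obtain rfl : tr = false := hg.2.1
      exact hU.dicotic _ _ _ _ (Nat.pos_of_ne_zero hm)
        (Nat.pos_of_ne_zero fun h => hm (hd.1.2 h))
        (fun i => IHL i (hg.2.2.1 i) (hd.2.1 i)) (fun i => IHR i (hg.2.2.2 i) (hd.2.2 i))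

lemma star_star (hU : IsUniverse U) : ∀ X, X ∈ U → Dicot X →
    (winsF (star + star + X) true ↔ winsF X true) ∧
    (winsF (star + star + X) false ↔ winsF X false) := by
  intro X
  have hs := star_mem hU
  induction X with
  | mk m n L R tl tr IHL IHR =>
    intro hX hd
    have hL : ∀ i, L i ∈ U := hU.moveL_mem _ hX
    have hR : ∀ i, R i ∈ U := hU.moveR_mem _ hX
    constructor
    · rw [star_add_T hU hs hX]
      constructor
      · rintro (h | ⟨j, h⟩ | ⟨j, h⟩)
        · by_contra hc
          apply h
          rw [winR_add star_game (hU.games _ hX)]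
          refine Or.inr (Or.inl ⟨(0 : Fin 1), ?_⟩)
          show ¬ winsF (0 + _) true
          rwa [Aug.zero_add]
        · have : star + star.moveL j = star := Aug.add_zero _
          rw [this] at h
          by_contra hc
          apply h
          rw [winR_add star_game (hU.games _ hX)]
          refine Or.inr (Or.inl ⟨(0 : Fin 1), ?_⟩)
          show ¬ winsF (0 + _) true
          rwa [Aug.zero_add]
        · rw [winT (hU.games _ hX)]
          refine Or.inr ⟨j, fun hc => h ?_⟩
          exact (IHL j (hL j) (hd.2.1 j)).2.2 hc
      · intro h
        rw [winT (hU.games _ hX)] at h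
        rcases h with h | ⟨j, h⟩
        · rw [eq_zero_of_ends (hU.games _ hX) h (hd.1.1 h)]
          left
          rw [Aug.add_zero, winR star_game]
          rintro (h | ⟨j, h⟩)
          · cases h
          · exact h (wins_zero _)
        · exact Or.inr (Or.inr ⟨j, fun hc => h ((IHL j (hL j) (hd.2.1 j)).2.1 hc)⟩)
    · rw [star_add_R hU hs hX]
      constructor
      · rintro (h | ⟨j, h⟩ | ⟨j, h⟩)
        · by_contra hc
          apply h
          rw [winT_add star_game (hU.games _ hX)]
          refine Or.inr (Or.inl ⟨(0 : Fin 1), ?_⟩)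
          show ¬ winsF (0 + _) false
          rwa [Aug.zero_add]
        · have : star + star.moveR j = star := Aug.add_zero _
          rw [this] at h
          by_contra hc
          apply h
          rw [winT_add star_game (hU.games _ hX)]
          refine Or.inr (Or.inl ⟨(0 : Fin 1), ?_⟩)
          show ¬ winsF (0 + _) false
          rwa [Aug.zero_add]
        · rw [winR (hU.games _ hX)]
          refine Or.inr ⟨j, fun hc => h ?_⟩
          exact (IHR j (hR j) (hd.2.2 j)).1.2 hc
      · intro h
        rw [winR (hU.games _ hX)] at h
        rcases h with h | ⟨j, h⟩
        · rw [eq_zero_of_ends (hU.games _ hX) (hd.1.2 h) h]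
          left
          rw [Aug.add_zero, winT star_game]
          rintro (h | ⟨j, h⟩)
          · cases h
          · exact h (wins_zero _)
        · exact Or.inr (Or.inr ⟨j, fun hc => h ((IHR j (hR j) (hd.2.2 j)).1.1 hc)⟩)

end

end Aug

/-- the dicot universe is the only dead-ending universe in which
`*` is invertible. -/
theorem stmt17 (U : Set Aug) (hU : Aug.IsUniverse U)
    (hDE : ∀ G ∈ U, Aug.DeadEnding G) :
    Aug.Invertible U Aug.star ↔ U = {G : Aug | Aug.IsGame G ∧ Aug.Dicot G} := by
  constructor
  · rintro ⟨H, hH, he⟩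
    apply Set.Subset.antisymm
    · intro G hG
      refine ⟨hU.games _ hG, ?_⟩
      by_contra hnd
      refine hnd (Aug.all_dicot hU (fun X hX hX0 => ?_) G hG)
      by_contra hXR
      obtain ⟨K, hK, hK0, j, hj⟩ := Aug.find_K hU X hX ((hDE X hX).leh hX0) hXR
      have hle : Aug.leZ U (Aug.star + H) := by
        intro Y hY
        have := he Y hY
        simp only [Aug.outEq, Aug.oL, Aug.oR, Aug.zero_add] at this
        tauto
      refine (Aug.star_loses hU hDE hK hK0 j hj _ H (Nat.lt_succ_self _) hH hle).2 ?_
      have := (he K hK).1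
      rw [Aug.zero_add] at this
      refine this.2 ?_
      show Aug.winsF K true
      rw [Aug.winT (hU.games _ hK)]
      exact Or.inl hK0
    · rintro G ⟨hg, hd⟩
      exact Aug.dicot_sub hU G hg hd
  · intro hUD
    refine ⟨Aug.star, Aug.star_mem hU, fun X hX => ?_⟩
    have hd : Aug.Dicot X := by rw [hUD] at hX; exact hX.2
    have := Aug.star_star hU X hX hd
    rw [Aug.zero_add]
    exact ⟨this.1, not_congr this.2⟩
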